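/- Let n ≥ 2 be an integer and let G be the grid P_n □ P_2. Then the strong convexity spectrum of G equals S_SC(G) = ({1} ∪ {2j : ⌊n/2⌋ ≤ j ≤ n−1}) \ {2}. -/

import Mathlib

/-!  Common definitions: oriented graphs, geodesic convexity, convexity number,
strong convexity spectrum, and grid graphs. -/

variable {V : Type*}

/-- A directed walk of length `k` from `u` to `v` along the arc relation `A`,
encoded by the function `f` listing its vertices. -/
def IsDirWalk (A : V → V → Prop) (k : ℕ) (f : ℕ → V) (u v : V) : Prop :=
  f 0 = u ∧ f k = v ∧ ∀ i, i < k → A (f i) (f (i + 1))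

/-- There is a directed walk from `u` to `v`. -/
def DirReachable (A : V → V → Prop) (u v : V) : Prop :=
  ∃ k f, IsDirWalk A k f u v

/-- A digraph (given by its arc relation) is strongly connected. -/
def StrongConnected (A : V → V → Prop) : Prop :=
  ∀ u v : V, DirReachable A u v

/-- A `uv`-geodesic: a directed walk from `u` to `v` of minimum possible length
(such a walk is automatically a directed path). -/
def IsGeodesic (A : V → V → Prop) (k : ℕ) (f : ℕ → V) (u v : V) : Prop :=
  IsDirWalk A k f u v ∧ ∀ k' f', IsDirWalk A k' f' u v → k ≤ k'

/-- A nonempty vertex set `C` is convex if every vertex lying on a geodesic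
between two vertices of `C` (in either direction) belongs to `C`. -/
def DConvex (A : V → V → Prop) (C : Set V) : Prop :=
  C.Nonempty ∧ ∀ u ∈ C, ∀ v ∈ C, ∀ k f, IsGeodesic A k f u v → ∀ i ≤ k, f i ∈ C

/-- `A` is an orientation of the simple graph `G`: every arc is along an edge,
every edge gets an arc, and no edge gets both directions. -/
def IsOrientation (G : SimpleGraph V) (A : V → V → Prop) : Prop :=
  (∀ x y, A x y → G.Adj x y) ∧ (∀ x y, G.Adj x y → A x y ∨ A y x) ∧
    (∀ x y, A x y → ¬ A y x)

/-- The convexity number of a digraph: the maximum cardinality of a proper convex set. -/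
noncomputable def convexityNumber [Fintype V] (A : V → V → Prop) : ℕ :=
  sSup {k | ∃ C : Set V, DConvex A C ∧ C ≠ Set.univ ∧ C.ncard = k}

/-- The strong convexity spectrum of a graph: the set of convexity numbers of
its strongly connected orientations. -/
def strongConvexitySpectrum [Fintype V] (G : SimpleGraph V) : Set ℕ :=
  {k | ∃ A : V → V → Prop, IsOrientation G A ∧ StrongConnected A ∧ convexityNumber A = k}

/-- The grid graph `P_n □ P_m`. -/
def gridGraph (n m : ℕ) : SimpleGraph (Fin n × Fin m) :=
  (SimpleGraph.pathGraph n).boxProd (SimpleGraph.pathGraph m)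

/-! ## Walks as a relation -/

/-- There is a directed walk of length exactly `k`. -/
def WalkLen (A : V → V → Prop) (k : ℕ) (u v : V) : Prop := ∃ f, IsDirWalk A k f u v

theorem WalkLen.refl (A : V → V → Prop) (u : V) : WalkLen A 0 u u :=
  ⟨fun _ => u, rfl, rfl, fun i hi => by omega⟩

theorem WalkLen.single {A : V → V → Prop} {u v : V} (h : A u v) : WalkLen A 1 u v :=
  ⟨fun i => if i = 0 then u else v, by simp, by simp, fun i hi => by
    obtain rfl : i = 0 := by omega
    simpa using h⟩

/-- Concatenation, keeping track of the middle vertex. -/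
theorem IsDirWalk.append {A : V → V → Prop} {k l : ℕ} {f g : ℕ → V} {u v w : V}
    (hf : IsDirWalk A k f u v) (hg : IsDirWalk A l g v w) :
    IsDirWalk A (k + l) (fun i => if i ≤ k then f i else g (i - k)) u w := by
  obtain ⟨f0, fk, fs⟩ := hf
  obtain ⟨g0, gl, gs⟩ := hg
  refine ⟨by simp [f0], ?_, ?_⟩
  · by_cases hl : l = 0
    · subst hl; simp [fk, ← g0, ← gl]
    · simp [hl, gl]
  · intro i hi
    rcases lt_trichotomy i k with h | h | h
    · have h1 : i ≤ k := h.le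
      have h2 : i + 1 ≤ k := h
      simp only [h1, h2, if_true]
      exact fs i h
    · subst h
      have h2 : ¬ (i + 1 ≤ i) := by omega
      simp only [le_refl, h2, if_true, if_false, Nat.add_sub_cancel_left, fk, ← g0]
      exact gs 0 (by omega)
    · have h1 : ¬ i ≤ k := by omega
      have h2 : ¬ i + 1 ≤ k := by omega
      simp only [h1, h2, if_false]
      have h3 : i + 1 - k = (i - k) + 1 := by omega
      rw [h3]
      exact gs _ (by omega)

theorem WalkLen.trans {A : V → V → Prop} {k l : ℕ} {u v w : V}
    (hf : WalkLen A k u v) (hg : WalkLen A l v w) : WalkLen A (k + l) u w := by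
  obtain ⟨f, hf⟩ := hf
  obtain ⟨g, hg⟩ := hg
  exact ⟨_, hf.append hg⟩

theorem IsDirWalk.shift {A : V → V → Prop} {k : ℕ} {f : ℕ → V} {u v : V}
    (hf : IsDirWalk A k f u v) {i j : ℕ} (hij : i ≤ j) (hj : j ≤ k) :
    IsDirWalk A (j - i) (fun t => f (i + t)) (f i) (f j) := by
  refine ⟨by simp, ?_, ?_⟩
  · simp only; congr 1; omega
  · intro t ht
    exact hf.2.2 (i + t) (by omega)

theorem IsDirWalk.sub {A : V → V → Prop} {k : ℕ} {f : ℕ → V} {u v : V}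
    (hf : IsDirWalk A k f u v) {i j : ℕ} (hij : i ≤ j) (hj : j ≤ k) :
    WalkLen A (j - i) (f i) (f j) := ⟨_, hf.shift hij hj⟩

/-- A subwalk of a geodesic cannot be shortcut. -/
theorem IsGeodesic.sub_le {A : V → V → Prop} {k : ℕ} {f : ℕ → V} {u v : V}
    (hf : IsGeodesic A k f u v) {i j m : ℕ} (hij : i ≤ j) (hj : j ≤ k)
    (hw : WalkLen A m (f i) (f j)) : j - i ≤ m := by
  have h1 := hf.1.sub (Nat.zero_le i) (hij.trans hj)
  have h2 := hf.1.sub hj le_rfl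
  rw [hf.1.1] at h1
  rw [hf.1.2.1] at h2
  obtain ⟨g, hg⟩ := (h1.trans hw).trans h2
  have := hf.2 _ _ hg
  omega

theorem exists_geodesic {A : V → V → Prop} {u v : V} (h : DirReachable A u v) :
    ∃ k f, IsGeodesic A k f u v := by
  classical
  have h' : ∃ k, WalkLen A k u v := h
  obtain ⟨f, hf⟩ := Nat.find_spec h'
  exact ⟨Nat.find h', f, hf, fun k' f' hk => Nat.find_min' h' ⟨f', hk⟩⟩

theorem dconvex_singleton (A : V → V → Prop) (u : V) : DConvex A {u} := by
  refine ⟨⟨u, rfl⟩, ?_⟩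
  rintro a rfl b rfl k f hf i hi
  obtain ⟨g, hg⟩ := WalkLen.refl A b
  have := hf.2 _ _ hg
  obtain rfl : i = 0 := by omega
  exact hf.1.1

/-! ## Ladders -/

/-- `A` is a digraph whose vertices form a ladder with columns `lo, …, hi` (column map `c`, row
map `r`). The right-going arc between columns `i` and `i+1` lies in row `h i`, the vertical arc of
column `i` starts in row `v i`.  A column `i` is *right closing* if `v i = h (i-1)` and
*left closing* if `v i ≠ h i`. -/
structure Ladder (A : V → V → Prop) (c : V → ℤ) (r : V → Bool) (lo hi : ℤ)
    (h v : ℤ → Bool) : Prop where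
  lt : lo < hi
  inj : ∀ p q, c p = c q → r p = r q → p = q
  surj : ∀ i, lo ≤ i → i ≤ hi → ∀ x, ∃ p, c p = i ∧ r p = x
  bd : ∀ p, lo ≤ c p ∧ c p ≤ hi
  arc : ∀ p q, A p q ↔ (c q = c p + 1 ∧ r q = r p ∧ r p = h (c p)) ∨
    (c p = c q + 1 ∧ r q = r p ∧ r p ≠ h (c q)) ∨ (c p = c q ∧ r p ≠ r q ∧ r p = v (c p))
  nrc : v lo ≠ h (lo - 1)
  nlc : v hi = h hi
  valid : ∀ i, lo ≤ i → i ≤ hi → v i ≠ h i ∨ v i = h (i - 1)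

namespace Ladder

variable {A : V → V → Prop} {c : V → ℤ} {r : V → Bool} {lo hi : ℤ} {h v : ℤ → Bool}

theorem reflect (L : Ladder A c r lo hi h v) :
    Ladder A (fun p => - c p) r (-hi) (-lo) (fun i => ! h (-i - 1)) (fun i => v (-i)) where
  lt := by have := L.lt; omega
  inj := fun p q h1 h2 => L.inj p q (by omega) h2
  surj := fun i h1 h2 x => by
    obtain ⟨p, h3, h4⟩ := L.surj (-i) (by omega) (by omega) x
    exact ⟨p, by omega, h4⟩
  bd := fun p => by have := L.bd p; omega
  arc := fun p q => by
    rw [L.arc]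
    simp only [neg_neg]
    constructor
    · rintro (⟨h1, h2, h3⟩ | ⟨h1, h2, h3⟩ | ⟨h1, h2, h3⟩)
      · right; left; refine ⟨by omega, h2, ?_⟩
        rw [h3, h1]; simp
      · left; refine ⟨by omega, h2, ?_⟩
        have e3 : c p - 1 = c q := by omega
        rw [e3]; exact Bool.eq_not.2 h3
      · right; right; exact ⟨by omega, h2, h3⟩
    · rintro (⟨h1, h2, h3⟩ | ⟨h1, h2, h3⟩ | ⟨h1, h2, h3⟩)
      · right; left; refine ⟨by omega, h2, ?_⟩
        have : c q = c p - 1 := by omega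
        rw [this, h3]; simp
      · left; refine ⟨by omega, h2, ?_⟩
        have : c q - 1 = c p := by omega
        rw [this] at h3; simpa using h3
      · right; right; exact ⟨by omega, h2, h3⟩
  nrc := by
    have := L.nlc
    simpa using this
  nlc := by
    have := L.nrc
    simp only [neg_neg]
    exact Bool.eq_not.2 this
  valid := fun i h1 h2 => by
    have := L.valid (-i) (by omega) (by omega)
    have e : - (i - 1) - 1 = -i := by ring
    simp only [e]
    rcases this with h | h
    · right; exact Bool.eq_not.2 h
    · left; rw [h]; simp

theorem lc_lo (L : Ladder A c r lo hi h v) : v lo ≠ h lo := by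
  rcases L.valid lo le_rfl L.lt.le with h | h
  · exact h
  · exact absurd h L.nrc

theorem rc_hi (L : Ladder A c r lo hi h v) : v hi = h (hi - 1) := by
  rcases L.valid hi L.lt.le le_rfl with h | h
  · exact absurd L.nlc h
  · exact h

theorem step (L : Ladder A c r lo hi h v) {p q : V} (ha : A p q) :
    |c q - c p| + (if r p = r q then 0 else 1) ≤ 1 := by
  rcases (L.arc p q).1 ha with ⟨h1, h2, _⟩ | ⟨h1, h2, _⟩ | ⟨h1, h2, _⟩
  · simp [h1, h2]
  · simp [h1, h2]
  · simp [h1, h2]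

theorem dist (L : Ladder A c r lo hi h v) {k : ℕ} {f : ℕ → V} {p q : V}
    (hf : IsDirWalk A k f p q) : |c q - c p| + (if r p = r q then 0 else 1) ≤ k := by
  induction k generalizing q with
  | zero =>
    have : p = q := by rw [← hf.1, ← hf.2.1]
    simp [this]
  | succ k ih =>
    have h1 : IsDirWalk A k f p (f k) := ⟨hf.1, rfl, fun i hi => hf.2.2 i (by omega)⟩
    have h2 := ih h1
    have h3 : A (f k) q := by rw [← hf.2.1]; exact hf.2.2 k (by omega)
    have h4 := L.step h3
    have h5 : |c q - c p| ≤ |c q - c (f k)| + |c (f k) - c p| := abs_sub_le _ _ _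
    push_cast
    split_ifs at h2 h4 ⊢ <;> first | omega | (exfalso; simp_all)

theorem dist' (L : Ladder A c r lo hi h v) {k : ℕ} {f : ℕ → V} {p q : V}
    (hf : IsDirWalk A k f p q) {i j : ℕ} (hij : i ≤ j) (hj : j ≤ k) :
    |c (f j) - c (f i)| + (if r (f i) = r (f j) then 0 else 1) ≤ ((j - i : ℕ) : ℤ) :=
  L.dist (hf.shift hij hj)

theorem straight_right (L : Ladder A c r lo hi h v) (x : Bool) (p : V) (hp : r p = x) (t : ℕ) :
    ∀ q, r q = x → c q = c p + t → (∀ i, c p ≤ i → i < c q → h i = x) → WalkLen A t p q := by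
  induction t with
  | zero =>
    intro q hq hc _
    have : p = q := L.inj _ _ (by simp [hc]) (by rw [hp, hq])
    subst this; exact WalkLen.refl A p
  | succ t ih =>
    intro q hq hc hh
    push_cast at hc
    have hb := L.bd q
    have hb' := L.bd p
    obtain ⟨z, hz1, hz2⟩ := L.surj (c p + t) (by omega) (by omega) x
    refine (ih z hz2 hz1 (fun i h1 h2 => hh i h1 (by omega))).trans (WalkLen.single ?_)
    rw [L.arc]
    left
    refine ⟨by omega, by rw [hq, hz2], ?_⟩
    rw [hz2, hh _ (by omega) (by omega)]

theorem straight_left (L : Ladder A c r lo hi h v) (x : Bool) (p : V) (hp : r p = x) (t : ℕ) :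
    ∀ q, r q = x → c q = c p + t → (∀ i, c p ≤ i → i < c q → h i ≠ x) → WalkLen A t q p := by
  intro q hq hc hh
  refine L.reflect.straight_right x q hq t p hp (by omega) ?_
  intro i h1 h2
  have := hh (-i - 1) (by omega) (by omega)
  rw [Bool.eq_not.2 this, Bool.not_not]

/-- `h` is constant as long as there is no right closing column. -/
theorem h_const (L : Ladder A c r lo hi h v) {b : ℤ} (hb : lo ≤ b) (m : ℕ) (hm : b + m ≤ hi)
    (hn : ∀ i, b < i → i ≤ b + m → v i ≠ h (i - 1)) : h (b + m) = h b := by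
  induction m with
  | zero => simp
  | succ m ih =>
    push_cast at hm hn ⊢
    have h1 := ih (by omega) (fun i h1 h2 => hn i h1 (by omega))
    have h2 := hn (b + m + 1) (by omega) (by omega)
    have h3 := L.valid (b + m + 1) (by omega) (by omega)
    have e : b + (m : ℤ) + 1 - 1 = b + m := by ring
    rw [e] at h2 h3
    rw [← add_assoc, ← h1]
    revert h2 h3
    cases v (b + m + 1) <;> cases h (b + m + 1) <;> cases h (b + m) <;> simp

theorem h_const' (L : Ladder A c r lo hi h v) {b i : ℤ} (hb : lo ≤ b) (hbi : b ≤ i) (hi' : i ≤ hi)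
    (hn : ∀ j, b < j → j ≤ i → v j ≠ h (j - 1)) : h i = h b := by
  obtain ⟨m, rfl⟩ := Int.le.dest hbi
  exact L.h_const hb m hi' hn

/-- A right detour through a vertex to the right of column `b`. -/
theorem detour (L : Ladder A c r lo hi h v) {p q : V} (hpq : c p = c q)
    (hp : r p = h (c p)) (hq : r q ≠ h (c p)) (m : ℕ) (hm : 1 ≤ m) (hmh : c p + m ≤ hi)
    (hrc : v (c p + m) = h (c p + m - 1)) :
    ∃ k l z, k + l ≤ 2 * m + 1 ∧ c p < c z ∧ WalkLen A k p z ∧ WalkLen A l z q := by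
  induction m using Nat.strong_induction_on with
  | _ m ih =>
    by_cases hex : ∃ m', 1 ≤ m' ∧ m' < m ∧ v (c p + m') = h (c p + m' - 1)
    · obtain ⟨m', h1, h2, h3⟩ := hex
      obtain ⟨k, l, z, h4, h5⟩ := ih m' h2 h1 (by omega) h3
      exact ⟨k, l, z, by omega, h5⟩
    · push Not at hex
      have hb := L.bd p
      have hc : ∀ i, c p ≤ i → i < c p + m → h i = h (c p) := by
        intro i h1 h2
        refine L.h_const' hb.1 h1 (by omega) ?_
        intro j h3 h4
        have := hex (j - c p).toNat (by omega) (by omega)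
        have e : c p + ((j - c p).toNat : ℤ) = j := by omega
        rwa [e] at this
      obtain ⟨z, hz1, hz2⟩ := L.surj (c p + m) (by omega) hmh (h (c p))
      obtain ⟨w, hw1, hw2⟩ := L.surj (c p + m) (by omega) hmh (! h (c p))
      refine ⟨m, 1 + m, z, by omega, by omega, ?_, ?_⟩
      · exact L.straight_right (h (c p)) p hp m z hz2 hz1 (fun i h1 h2 => hc i h1 (by omega))
      · have hzw : A z w := by
          rw [L.arc]; right; right
          refine ⟨by omega, by rw [hz2, hw2]; simp, ?_⟩
          rw [hz2, hz1, hrc, hc (c p + m - 1) (by omega) (by omega)]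
        refine (WalkLen.single hzw).trans ?_
        refine L.straight_left (! h (c p)) q ?_ m w hw2 (by omega) ?_
        · exact Bool.eq_not.2 hq
        · intro i h1 h2
          rw [hc i (by omega) (by omega)]; simp

/-- Confinement: a walk turning around on the right must go far. -/
theorem conf (L : Ladder A c r lo hi h v) {p q : V} (hpq : c p = c q) (hlc : v (c p) ≠ h (c p))
    (hp : r p = h (c p)) (hq : r q ≠ h (c p)) (m : ℕ) (hm : 1 ≤ m)
    (hn : ∀ i, c p < i → i < c p + m → v i ≠ h (i - 1)) {k : ℕ} {f : ℕ → V}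
    (hf : IsDirWalk A k f p q) (hstay : ∀ i ≤ k, c p ≤ c (f i)) : 2 * m + 1 ≤ k := by
  have key : ∀ i ≤ k, (r (f i) = h (c p) ∧ c (f i) < c p + m) ∨
      ∃ j ≤ i, r (f j) = h (c p) ∧ c p + m ≤ c (f j) := by
    intro i
    induction i with
    | zero =>
      intro _
      left
      rw [hf.1]
      exact ⟨hp, by omega⟩
    | succ i ih =>
      intro hi'
      rcases ih (by omega) with ⟨h1, h2⟩ | ⟨j, hj, h1⟩
      · have hr : r (f (i + 1)) = h (c p) := by
          rcases (L.arc _ _).1 (hf.2.2 i (by omega)) with ⟨_, h4, _⟩ | ⟨_, h4, _⟩ | ⟨_, _, h5⟩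
          · rw [h4, h1]
          · rw [h4, h1]
          · exfalso
            have hs := hstay i (by omega)
            have hb := L.bd (f i)
            have hb' := L.bd p
            have e : h (c (f i)) = h (c p) :=
              L.h_const' hb'.1 hs hb.2 (fun j h1 h2 => hn j h1 (by omega))
            rw [h1] at h5
            rcases hs.eq_or_lt with h6 | h6
            · rw [← h6] at h5; exact hlc h5.symm
            · have h7 := hn _ h6 h2
              have h8 := L.valid _ hb.1 hb.2
              rw [e, h5] at h8
              rcases h8 with h8 | h8
              · exact h8 rfl
              · exact h7 h8
        by_cases hlt : c (f (i + 1)) < c p + m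
        · left; exact ⟨hr, hlt⟩
        · right; exact ⟨i + 1, le_rfl, hr, by omega⟩
      · right; exact ⟨j, by omega, h1⟩
  rcases key k le_rfl with ⟨h1, _⟩ | ⟨j, hj, h1, h2⟩
  · rw [hf.2.1] at h1; exact absurd h1 hq
  · have d1 := L.dist' hf (Nat.zero_le j) hj
    have d2 := L.dist' hf hj le_rfl
    rw [hf.1] at d1
    rw [hf.2.1, h1, if_neg (fun e => hq e.symm)] at d2
    have a1 := le_abs_self (c (f j) - c p)
    have a2 := neg_abs_le (c q - c (f j))
    split_ifs at d1 <;> omega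

end Ladder

/-! ## Good columns -/

/-- Column `b` closes a convex initial segment. -/
def GoodP (lo : ℤ) (Lc Rc : ℤ → Prop) (b : ℤ) : Prop :=
  Rc b ∧ (Lc b → ∃ m : ℕ, 1 ≤ m ∧ lo ≤ b - m ∧ Lc (b - m) ∧ ∀ j, b < j → j ≤ b + m → ¬ Rc j)

/-- Column `a` opens a convex final segment. -/
def GoodS (hi : ℤ) (Lc Rc : ℤ → Prop) (a : ℤ) : Prop :=
  Lc a ∧ (Rc a → ∃ m : ℕ, 1 ≤ m ∧ a + m ≤ hi ∧ Rc (a + m) ∧ ∀ j, a - m ≤ j → j < a → ¬ Lc j)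

theorem goodP_neg (hi : ℤ) (Lc Rc : ℤ → Prop) (a : ℤ) :
    GoodP (-hi) (fun i => Rc (-i)) (fun i => Lc (-i)) (-a) ↔ GoodS hi Lc Rc a := by
  unfold GoodP GoodS
  simp only [neg_neg]
  refine and_congr Iff.rfl (imp_congr Iff.rfl (exists_congr fun m => and_congr Iff.rfl ?_))
  have e : -(-a - (m : ℤ)) = a + m := by ring
  rw [e]
  refine and_congr (by constructor <;> intro _ <;> omega) (and_congr Iff.rfl ?_)
  constructor
  · intro H j h1 h2 h3
    exact H (-j) (by omega) (by omega) (by rwa [neg_neg])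
  · intro H j h1 h2
    exact H (-j) (by omega) (by omega)

namespace Ladder

variable {A : V → V → Prop} {c : V → ℤ} {r : V → Bool} {lo hi : ℤ} {h v : ℤ → Bool}

/-- left closing columns of the reflected ladder -/
theorem refl_lc (h v : ℤ → Bool) :
    (fun i : ℤ => (fun i => v (-i)) i ≠ (fun i => ! h (-i - 1)) i) =
      fun i => (fun j => v j = h (j - 1)) (-i) := by
  funext i
  simp only [eq_iff_iff]
  cases v (-i) <;> cases h (-i - 1) <;> simp

/-- right closing columns of the reflected ladder -/
theorem refl_rc (h v : ℤ → Bool) :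
    (fun i : ℤ => (fun i => v (-i)) i = (fun i => ! h (-i - 1)) (i - 1)) =
      fun i => (fun j => v j ≠ h j) (-i) := by
  funext i
  have e : - (i - 1) - 1 = -i := by ring
  simp only [eq_iff_iff, e]
  cases v (-i) <;> cases h (-i) <;> simp

theorem detour_left (L : Ladder A c r lo hi h v) {p q : V} (hpq : c p = c q)
    (hp : r p ≠ h (c p - 1)) (hq : r q = h (c p - 1)) (m : ℕ) (hm : 1 ≤ m) (hml : lo ≤ c p - m)
    (hlc : v (c p - m) ≠ h (c p - m)) :
    ∃ k l z, k + l ≤ 2 * m + 1 ∧ c z < c p ∧ WalkLen A k p z ∧ WalkLen A l z q := by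
  obtain ⟨k, l, z, h1, h2, h3⟩ := L.reflect.detour (p := p) (q := q) (by omega)
    (by simp only [neg_neg]; exact Bool.eq_not.2 hp)
    (by simp only [neg_neg]; rw [hq]; simp) m hm (by omega)
    (by
      have e1 : -(-c p + (m : ℤ)) = c p - m := by ring
      have e2 : -(-c p + (m : ℤ) - 1) - 1 = c p - m := by ring
      simp only [e1, e2]; exact Bool.eq_not.2 hlc)
  exact ⟨k, l, z, h1, by omega, h3⟩

theorem conf_left (L : Ladder A c r lo hi h v) {p q : V} (hpq : c p = c q)
    (hrc : v (c p) = h (c p - 1))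
    (hp : r p ≠ h (c p - 1)) (hq : r q = h (c p - 1)) (m : ℕ) (hm : 1 ≤ m)
    (hn : ∀ i, c p - m < i → i < c p → v i = h i) {k : ℕ} {f : ℕ → V}
    (hf : IsDirWalk A k f p q) (hstay : ∀ i ≤ k, c (f i) ≤ c p) : 2 * m + 1 ≤ k := by
  refine L.reflect.conf (p := p) (q := q) (by omega) ?_
    (by simp only [neg_neg]; exact Bool.eq_not.2 hp)
    (by simp only [neg_neg]; rw [hq]; simp) m hm ?_ hf ?_
  · simp only [neg_neg]; rw [hrc]; simp
  · intro i h1 h2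
    have e2 : -(i - 1) - 1 = -i := by ring
    simp only [e2]
    rw [hn (-i) (by omega) (by omega)]; simp
  · intro i hi'
    have := hstay i hi'
    omega

theorem strong (L : Ladder A c r lo hi h v) : StrongConnected A := by
  have tr : ∀ {x y z : V}, DirReachable A x y → DirReachable A y z → DirReachable A x z := by
    rintro x y z ⟨k, h1⟩ ⟨l, h2⟩
    exact ⟨k + l, WalkLen.trans h1 h2⟩
  have rf : ∀ x : V, DirReachable A x x := fun x => ⟨0, WalkLen.refl A x⟩
  have sg : ∀ {x y : V}, A x y → DirReachable A x y := fun hxy => ⟨1, WalkLen.single hxy⟩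
  have col : ∀ p q : V, c p = c q → DirReachable A p q := by
    intro p q hpq
    by_cases hr : r p = r q
    · rw [L.inj p q hpq hr]; exact rf q
    by_cases hv : r p = v (c p)
    · refine sg ?_
      rw [L.arc]; right; right; exact ⟨hpq, hr, hv⟩
    have hq : r q = v (c p) := by
      revert hr hv
      cases r p <;> cases r q <;> cases v (c p) <;> simp
    have hb := L.bd p
    rcases L.valid (c p) hb.1 hb.2 with hl | hl
    · have hne : c p ≠ hi := by
        intro e; rw [e] at hl; exact hl L.nlc
      obtain ⟨k, l, z, _, _, h1, h2⟩ := L.detour hpq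
        (by revert hv hl; cases r p <;> cases h (c p) <;> cases v (c p) <;> simp)
        (by rw [hq]; exact hl) (hi - c p).toNat (by omega) (by omega)
        (by
          have e : c p + ((hi - c p).toNat : ℤ) = hi := by omega
          rw [e]; exact L.rc_hi)
      exact ⟨_, h1.trans h2⟩
    · have hne : c p ≠ lo := by
        intro e; rw [e] at hl; exact L.nrc hl
      obtain ⟨k, l, z, _, _, h1, h2⟩ := L.detour_left hpq
        (by rw [← hl]; exact hv)
        (by rw [hq]; exact hl) (c p - lo).toNat (by omega) (by omega)
        (by
          have e : c p - ((c p - lo).toNat : ℤ) = lo := by omega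
          rw [e]; exact L.lc_lo)
      exact ⟨_, h1.trans h2⟩
  have right : ∀ (m : ℕ) (p q : V), c q = c p + m → DirReachable A p q ∧ DirReachable A q p := by
    intro m
    induction m with
    | zero =>
      intro p q hpq
      simp only [Nat.cast_zero, add_zero] at hpq
      exact ⟨col p q hpq.symm, col q p hpq⟩
    | succ m ih =>
      intro p q hpq
      push_cast at hpq
      have hb := L.bd p
      have hb' := L.bd q
      obtain ⟨z1, a1, b1⟩ := L.surj (c p + m) (by omega) (by omega) (h (c p + m))
      obtain ⟨z2, a2, b2⟩ := L.surj (c p + m) (by omega) (by omega) (! h (c p + m))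
      obtain ⟨w1, a3, b3⟩ := L.surj (c q) (by omega) (by omega) (h (c p + m))
      obtain ⟨w2, a4, b4⟩ := L.surj (c q) (by omega) (by omega) (! h (c p + m))
      constructor
      · refine tr (ih p z1 a1).1 (tr (sg ?_) (col w1 q a3))
        rw [L.arc]; left
        exact ⟨by omega, by rw [b1, b3], by rw [b1, a1]⟩
      · refine tr (col q w2 a4.symm) (tr (sg ?_) (ih p z2 a2).2)
        rw [L.arc]; right; left
        exact ⟨by omega, by rw [b2, b4], by rw [b4, a2]; simp⟩
  intro p q
  rcases le_total (c p) (c q) with hle | hle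
  · exact (right (c q - c p).toNat p q (by omega)).1
  · exact (right (c p - c q).toNat q p (by omega)).2

theorem lower_convex (L : Ladder A c r lo hi h v) {b : ℤ} (hb1 : lo ≤ b) (hb2 : b < hi)
    (hg : GoodP lo (fun i => v i ≠ h i) (fun i => v i = h (i - 1)) b) :
    DConvex A {p | c p ≤ b} := by
  classical
  refine ⟨?_, ?_⟩
  · obtain ⟨p, hp, _⟩ := L.surj b hb1 hb2.le true
    exact ⟨p, hp.le⟩
  intro s hs t ht k f hf i hi'
  by_contra hcon
  simp only [Set.mem_ofPred_eq, not_le] at hs ht hcon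
  -- last index before `i` inside
  obtain ⟨i1, hi1, hi1c, hi1m⟩ : ∃ i1, i1 < i ∧ c (f i1) ≤ b ∧ ∀ j, i1 < j → j ≤ i → b < c (f j) := by
    let P : ℕ → Prop := fun d => d ≤ i ∧ c (f (i - d)) ≤ b
    have hP : ∃ d, P d := ⟨i, le_rfl, by simpa [hf.1.1] using hs⟩
    have h0 := Nat.find_spec hP
    have h1 : Nat.find hP ≠ 0 := by
      intro e; rw [e] at h0; have := h0.2; simp at this; omega
    refine ⟨i - Nat.find hP, by have := h0.1; omega, h0.2, ?_⟩
    intro j hj1 hj2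
    have h2 := Nat.find_min hP (m := i - j) (by have := h0.1; omega)
    by_contra h3
    exact h2 ⟨by omega, by rw [Nat.sub_sub_self hj2]; omega⟩
  obtain ⟨i2, hi2, hi2k, hi2c, hi2m⟩ : ∃ i2, i < i2 ∧ i2 ≤ k ∧ c (f i2) ≤ b ∧
      ∀ j, i ≤ j → j < i2 → b < c (f j) := by
    let P : ℕ → Prop := fun d => i ≤ d ∧ d ≤ k ∧ c (f d) ≤ b
    have hP : ∃ d, P d := ⟨k, hi', le_rfl, by simpa [hf.1.2.1] using ht⟩
    have h0 := Nat.find_spec hP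
    refine ⟨Nat.find hP, ?_, h0.2.1, h0.2.2, ?_⟩
    · refine lt_of_le_of_ne h0.1 ?_
      intro e
      have := h0.2.2
      rw [← e] at this; omega
    · intro j hj1 hj2
      have h2 := Nat.find_min hP hj2
      have h3 := h0.2.1
      by_contra h4
      exact h2 ⟨hj1, by omega, by omega⟩
  have hmid : ∀ j, i1 < j → j < i2 → b < c (f j) := by
    intro j h1 h2
    rcases le_total j i with h3 | h3
    · exact hi1m j h1 h3
    · exact hi2m j h3 h2
  have A1 : c (f i1) = b ∧ r (f i1) = h b := by
    have h1 := hmid (i1 + 1) (by omega) (by omega)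
    rcases (L.arc _ _).1 (hf.1.2.2 i1 (by omega)) with ⟨h2, h3, h4⟩ | ⟨h2, h3, h4⟩ | ⟨h2, h3, h4⟩
    · have e : c (f i1) = b := by omega
      exact ⟨e, by rw [h4, e]⟩
    · omega
    · omega
  have A2 : c (f i2) = b ∧ r (f i2) ≠ h b := by
    have h1 := hmid (i2 - 1) (by omega) (by omega)
    have h5 := hf.1.2.2 (i2 - 1) (by omega)
    have e5 : i2 - 1 + 1 = i2 := by omega
    rw [e5] at h5
    rcases (L.arc _ _).1 h5 with ⟨h2, h3, h4⟩ | ⟨h2, h3, h4⟩ | ⟨h2, h3, h4⟩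
    · omega
    · have e : c (f i2) = b := by omega
      exact ⟨e, by rw [h3]; rw [e] at h4; exact h4⟩
    · omega
  obtain ⟨c1, r1⟩ := A1
  obtain ⟨c2, r2⟩ := A2
  obtain ⟨hrc, hg⟩ := hg
  replace hrc : v b = h (b - 1) := hrc
  by_cases hlc : v b = h b
  · have ha : A (f i1) (f i2) := by
      rw [L.arc]; right; right
      exact ⟨by omega, by rw [r1]; exact fun e => r2 e.symm, by rw [r1, c1, hlc]⟩
    have := hf.sub_le (i := i1) (j := i2) (by omega) hi2k (WalkLen.single ha)
    omega
  · obtain ⟨m, hm, hml, hmc, hmr⟩ := hg hlc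
    obtain ⟨k', l', z, hkl, _, w1, w2⟩ := L.detour_left (p := f i1) (q := f i2) (by omega)
      (by rw [c1, ← hrc, r1]; exact fun e => hlc e.symm)
      (by
        rw [c1, ← hrc]
        revert hlc r2
        cases v b <;> cases r (f i2) <;> cases h b <;> simp)
      m hm (by rw [c1]; exact hml) (by rw [c1]; exact hmc)
    have h1 := hf.sub_le (i := i1) (j := i2) (by omega) hi2k (w1.trans w2)
    have h2 := L.conf (p := f i1) (q := f i2) (by omega) (by rw [c1]; exact hlc) (by rw [r1, c1])
      (by rw [c1]; exact r2) (m + 1) (by omega)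
      (by intro j h3 h4; push_cast at h4; exact hmr j (by omega) (by omega))
      (hf.1.shift (i := i1) (j := i2) (by omega) hi2k)
      (by
        intro j hj
        rw [c1]
        rcases Nat.eq_zero_or_pos j with h0 | h0
        · subst h0; simp [c1]
        · rcases hj.eq_or_lt with h6 | h6
          · have e : i1 + j = i2 := by omega
            simp only [e]; omega
          · exact (hmid (i1 + j) (by omega) (by omega)).le)
    omega

theorem upper_convex (L : Ladder A c r lo hi h v) {a : ℤ} (ha1 : lo < a) (ha2 : a ≤ hi)
    (hg : GoodS hi (fun i => v i ≠ h i) (fun i => v i = h (i - 1)) a) :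
    DConvex A {p | a ≤ c p} := by
  have := L.reflect.lower_convex (b := -a) (by omega) (by omega) (by
    rw [refl_lc, refl_rc]
    exact (goodP_neg hi (fun i => v i ≠ h i) (fun i => v i = h (i - 1)) a).2 hg)
  simpa using this

theorem goodP_of_convex (L : Ladder A c r lo hi h v) {a b : ℤ} (ha : lo ≤ a) (hab : a < b)
    (hb : b < hi) (hC : DConvex A {p | a ≤ c p ∧ c p ≤ b}) :
    GoodP lo (fun i => v i ≠ h i) (fun i => v i = h (i - 1)) b := by
  classical
  obtain ⟨p, hp1, hp2⟩ := L.surj b (by omega) hb.le (! v b)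
  obtain ⟨q, hq1, hq2⟩ := L.surj b (by omega) hb.le (v b)
  obtain ⟨k, f, hf⟩ := exists_geodesic (L.strong p q)
  have hpC : p ∈ {p | a ≤ c p ∧ c p ≤ b} := ⟨by omega, by omega⟩
  have hqC : q ∈ {p | a ≤ c p ∧ c p ≤ b} := ⟨by omega, by omega⟩
  have hin := hC.2 p hpC q hqC k f hf
  have hk : 0 < k := by
    rcases Nat.eq_zero_or_pos k with h0 | h0
    · exfalso
      subst h0
      have e : p = q := by rw [← hf.1.1, ← hf.1.2.1]
      rw [e, hq2] at hp2
      simp at hp2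
    · exact h0
  have hrc : v b = h (b - 1) := by
    by_contra hrc
    have h1 := hf.1.2.2 0 hk
    rw [hf.1.1] at h1
    have h2 := hin 1 (by omega)
    simp only [Set.mem_ofPred_eq] at h2
    rcases (L.arc _ _).1 h1 with ⟨h3, h4, h5⟩ | ⟨h3, h4, h5⟩ | ⟨h3, h4, h5⟩
    · simp only [zero_add] at h3; omega
    · simp only [zero_add] at h3
      have e : c (f (0 + 1)) = b - 1 := by simp only [zero_add]; omega
      rw [e, hp2] at h5
      revert h5 hrc
      cases v b <;> cases h (b - 1) <;> simp
    · rw [hp1, hp2] at h5; simp at h5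
  refine ⟨hrc, ?_⟩
  intro hlc
  replace hlc : v b ≠ h b := hlc
  have hP : ∃ m : ℕ, 1 ≤ m ∧ lo ≤ b - m ∧ v (b - m) ≠ h (b - m) :=
    ⟨(b - lo).toNat, by omega, by omega, by
      have e : b - ((b - lo).toNat : ℤ) = lo := by omega
      rw [e]; exact L.lc_lo⟩
  obtain ⟨hm1, hm2, hm3⟩ := Nat.find_spec hP
  have hmin : ∀ j : ℤ, b - (Nat.find hP : ℕ) < j → j < b → v j = h j := by
    intro j h1 h2
    by_contra h3
    refine Nat.find_min hP (m := (b - j).toNat) (by omega) ⟨by omega, by omega, ?_⟩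
    have e : b - ((b - j).toNat : ℤ) = j := by omega
    rw [e]; exact h3
  generalize Nat.find hP = m at *
  refine ⟨m, hm1, hm2, hm3, ?_⟩
  intro j hj1 hj2 hj
  replace hj : v j = h (j - 1) := hj
  have hd := L.conf_left (p := p) (q := q) (by omega) (by rw [hp1]; exact hrc)
    (by rw [hp1, ← hrc, hp2]; simp) (by rw [hp1, ← hrc, hq2]) m hm1
    (by rw [hp1]; exact hmin) hf.1 (by intro i hi'; rw [hp1]; exact (hin i hi').2)
  have hjhi : ∃ m' : ℕ, 1 ≤ m' ∧ m' ≤ m ∧ b + m' ≤ hi ∧ v (b + m') = h (b + m' - 1) := by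
    rcases le_total j hi with h1 | h1
    · refine ⟨(j - b).toNat, by omega, by omega, by omega, ?_⟩
      have e : b + ((j - b).toNat : ℤ) = j := by omega
      rw [e]; exact hj
    · refine ⟨(hi - b).toNat, by omega, by omega, by omega, ?_⟩
      have e : b + ((hi - b).toNat : ℤ) = hi := by omega
      rw [e]; exact L.rc_hi
  obtain ⟨m', n1, n2, n3, n4⟩ := hjhi
  obtain ⟨k1, l1, z, hkl, hz, ⟨g1, w1⟩, ⟨g2, w2⟩⟩ := L.detour (p := p) (q := q) (by omega)
    (by
      rw [hp1, hp2]; revert hlc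
      cases v b <;> cases h b <;> simp) (by rw [hp1, hq2]; exact hlc) m' n1 (by rw [hp1]; exact n3)
    (by rw [hp1]; exact n4)
  have hw := w1.append w2
  have hgeo : IsGeodesic A (k1 + l1) (fun i => if i ≤ k1 then g1 i else g2 (i - k1)) p q := by
    refine ⟨hw, fun k' f' h' => ?_⟩
    have := hf.2 _ _ h'
    omega
  have hzC := hC.2 p hpC q hqC _ _ hgeo k1 (by omega)
  simp only [le_refl, if_true, w1.2.1, Set.mem_ofPred_eq] at hzC
  omega

theorem goodS_of_convex (L : Ladder A c r lo hi h v) {a b : ℤ} (ha : lo < a) (hab : a < b)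
    (hb : b ≤ hi) (hC : DConvex A {p | a ≤ c p ∧ c p ≤ b}) :
    GoodS hi (fun i => v i ≠ h i) (fun i => v i = h (i - 1)) a := by
  have := L.reflect.goodP_of_convex (a := -b) (b := -a) (by omega) (by omega) (by omega) (by
    have e : {p | -b ≤ -c p ∧ -c p ≤ -a} = {p | a ≤ c p ∧ c p ≤ b} := by
      ext p; simp only [Set.mem_ofPred_eq]; omega
    rw [e]; exact hC)
  rw [refl_lc, refl_rc] at this
  exact (goodP_neg hi (fun i => v i ≠ h i) (fun i => v i = h (i - 1)) a).1 this

/-- A walk from a column `≤ i` to a column `> i` uses the right-going arc at gap `i`. -/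
theorem cross_right (L : Ladder A c r lo hi h v) {k : ℕ} {f : ℕ → V} {p q : V}
    (hf : IsDirWalk A k f p q) {i : ℤ} (hp : c p ≤ i) (hq : i < c q) :
    ∃ j, j + 1 ≤ k ∧ c (f j) = i ∧ r (f j) = h i ∧ c (f (j + 1)) = i + 1 ∧ r (f (j + 1)) = h i := by
  by_contra hno
  have : ∀ j ≤ k, c (f j) ≤ i := by
    intro j
    induction j with
    | zero => intro _; rw [hf.1]; exact hp
    | succ j ih =>
      intro hj
      have h1 := ih (by omega)
      by_contra h2
      rcases (L.arc _ _).1 (hf.2.2 j (by omega)) with ⟨h3, h4, h5⟩ | ⟨h3, h4, h5⟩ | ⟨h3, h4, h5⟩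
      · have e : c (f j) = i := by omega
        rw [e] at h5
        exact hno ⟨j, hj, e, h5, by omega, by rw [h4, h5]⟩
      · omega
      · omega
  have := this k le_rfl
  rw [hf.2.1] at this
  omega

theorem cross_left (L : Ladder A c r lo hi h v) {k : ℕ} {f : ℕ → V} {p q : V}
    (hf : IsDirWalk A k f p q) {i : ℤ} (hp : i < c p) (hq : c q ≤ i) :
    ∃ j, j + 1 ≤ k ∧ c (f j) = i + 1 ∧ r (f j) ≠ h i ∧ c (f (j + 1)) = i ∧ r (f (j + 1)) ≠ h i := by
  obtain ⟨j, h1, h2, h3, h4, h5⟩ := L.reflect.cross_right hf (i := - i - 1) (by omega) (by omega)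
  have e : - (-i - 1) - 1 = i := by ring
  simp only [e] at h3 h5
  exact ⟨j, h1, by omega, Bool.eq_not.1 h3, by omega, Bool.eq_not.1 h5⟩

/-- Two vertices of a convex set in different columns fill all the columns between. -/
theorem fill (L : Ladder A c r lo hi h v) {C : Set V} (hC : DConvex A C) {p q : V} (hp : p ∈ C)
    (hq : q ∈ C) (hpq : c p < c q) (z : V) (h1 : c p ≤ c z) (h2 : c z ≤ c q) : z ∈ C := by
  obtain ⟨k, f, hf⟩ := exists_geodesic (L.strong p q)
  obtain ⟨l, g, hg⟩ := exists_geodesic (L.strong q p)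
  have hfC := hC.2 p hp q hq k f hf
  have hgC := hC.2 q hq p hp l g hg
  have main : ∀ i, c p ≤ i → i < c q → (c z = i ∨ c z = i + 1) → z ∈ C := by
    intro i h3 h4 h5
    obtain ⟨j, a1, a2, a3, a4, a5⟩ := L.cross_right hf.1 h3 h4
    obtain ⟨j', b1, b2, b3, b4, b5⟩ := L.cross_left hg.1 h4 h3
    by_cases hr : r z = h i
    · rcases h5 with h5 | h5
      · rw [L.inj z (f j) (by omega) (by rw [hr, a3])]; exact hfC j (by omega)
      · rw [L.inj z (f (j + 1)) (by omega) (by rw [hr, a5])]; exact hfC _ a1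
    · rcases h5 with h5 | h5
      · rw [L.inj z (g (j' + 1)) (by omega) (by rw [Bool.eq_not.2 hr, Bool.eq_not.2 b5])]
        exact hgC _ b1
      · rw [L.inj z (g j') (by omega) (by rw [Bool.eq_not.2 hr, Bool.eq_not.2 b3])]
        exact hgC j' (by omega)
  rcases h2.eq_or_lt with h3 | h3
  · exact main (c q - 1) (by omega) (by omega) (by omega)
  · exact main (c z) h1 h3 (by omega)

theorem interval_of_convex (L : Ladder A c r lo hi h v) {C : Set V} (hC : DConvex A C)
    (hn : ¬ C.Subsingleton) :
    ∃ a b, lo ≤ a ∧ a < b ∧ b ≤ hi ∧ C = {p | a ≤ c p ∧ c p ≤ b} := by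
  have hcol : ∃ p ∈ C, ∃ q ∈ C, c p < c q := by
    by_contra hcon
    have hcc : ∀ p ∈ C, ∀ q ∈ C, c p = c q := by
      intro p hp q hq
      rcases lt_trichotomy (c p) (c q) with h1 | h1 | h1
      · exact absurd ⟨p, hp, q, hq, h1⟩ hcon
      · exact h1
      · exact absurd ⟨q, hq, p, hp, h1⟩ hcon
    apply hn
    have aux : ∀ p ∈ C, ∀ q ∈ C, r p ≠ v (c p) → p = q := by
      intro p hp q hq hv
      obtain ⟨k, f, hf⟩ := exists_geodesic (L.strong p q)
      rcases Nat.eq_zero_or_pos k with h0 | h0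
      · subst h0; rw [← hf.1.1, ← hf.1.2.1]
      · exfalso
        have h1 := hf.1.2.2 0 h0
        have h2 := hcc p hp _ (hC.2 p hp q hq k f hf 1 h0)
        rw [hf.1.1] at h1
        simp only [zero_add] at h1
        rcases (L.arc _ _).1 h1 with ⟨h3, h4, h5⟩ | ⟨h3, h4, h5⟩ | ⟨h3, h4, h5⟩
        · omega
        · omega
        · exact hv h5
    intro p hp q hq
    by_cases h1 : r p = v (c p)
    · by_cases h2 : r q = v (c q)
      · have e := hcc p hp q hq
        exact L.inj p q e (by rw [h1, h2, e])
      · exact (aux q hq p hp h2).symm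
    · exact aux p hp q hq h1
  obtain ⟨p0, hp0, q0, hq0, hpq0⟩ := hcol
  obtain ⟨a, ⟨pa, hpa, hpa'⟩, hamin⟩ := Int.exists_least_of_bdd (P := fun i => ∃ p ∈ C, c p = i)
    ⟨lo, by rintro z ⟨p, _, rfl⟩; exact (L.bd p).1⟩ ⟨c p0, p0, hp0, rfl⟩
  obtain ⟨b, ⟨pb, hpb, hpb'⟩, hbmax⟩ := Int.exists_greatest_of_bdd (P := fun i => ∃ p ∈ C, c p = i)
    ⟨hi, by rintro z ⟨p, _, rfl⟩; exact (L.bd p).2⟩ ⟨c p0, p0, hp0, rfl⟩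
  have h1 := hamin _ ⟨p0, hp0, rfl⟩
  have h2 := hbmax _ ⟨q0, hq0, rfl⟩
  have h3 := L.bd pa
  have h4 := L.bd pb
  refine ⟨a, b, by omega, by omega, by omega, ?_⟩
  ext z
  simp only [Set.mem_ofPred_eq]
  constructor
  · intro hz
    exact ⟨hamin _ ⟨z, hz, rfl⟩, hbmax _ ⟨z, hz, rfl⟩⟩
  · rintro ⟨h5, h6⟩
    exact L.fill hC hpa hpb (by omega) z (by omega) (by omega)

theorem ncard_interval (L : Ladder A c r lo hi h v) {a b : ℤ} (ha : lo ≤ a) (hb : b ≤ hi) :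
    {p | a ≤ c p ∧ c p ≤ b}.ncard = 2 * (b + 1 - a).toNat := by
  have hinj : Function.Injective (fun p => (c p, r p)) := by
    intro p q hpq
    simp only [Prod.mk.injEq] at hpq
    exact L.inj p q hpq.1 hpq.2
  rw [← Set.ncard_image_of_injective _ hinj]
  have e : Set.image (fun p => (c p, r p)) {p | a ≤ c p ∧ c p ≤ b} =
      ((Finset.Icc a b ×ˢ (Finset.univ : Finset Bool) : Finset (ℤ × Bool)) : Set (ℤ × Bool)) := by
    ext ⟨i, x⟩
    simp only [Set.mem_image, Set.mem_ofPred_eq, Prod.mk.injEq, Finset.coe_product, Set.mem_prod,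
      Finset.mem_coe, Finset.mem_Icc, Finset.mem_univ, and_true]
    constructor
    · rintro ⟨p, ⟨h1, h2⟩, rfl, rfl⟩; exact ⟨h1, h2⟩
    · rintro ⟨h1, h2⟩
      obtain ⟨p, h3, h4⟩ := L.surj i (by omega) (by omega) x
      exact ⟨p, ⟨by omega, by omega⟩, h3, h4⟩
  rw [e, Set.ncard_coe_finset, Finset.card_product]
  simp [mul_comm]

end Ladder

/-! ## Combinatorics of the words -/

theorem allB_not_good {N : ℤ} {Lc Rc : ℤ → Prop} (hL : ∀ i, 0 ≤ i → i < N → Lc i)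
    (hR : ∀ i, 0 < i → i ≤ N → Rc i) {g : ℤ} (h0 : 0 < g) (hN : g < N) :
    ¬ GoodP 0 Lc Rc g ∧ ¬ GoodS N Lc Rc g := by
  constructor
  · rintro ⟨_, h2⟩
    obtain ⟨m, h3, h4, h5, h6⟩ := h2 (hL g h0.le hN)
    exact h6 (g + 1) (by omega) (by omega) (hR _ (by omega) (by omega))
  · rintro ⟨_, h2⟩
    obtain ⟨m, h3, h4, h5, h6⟩ := h2 (hR g h0 hN.le)
    exact h6 (g - 1) (by omega) (by omega) (hL _ (by omega) (by omega))

theorem exists_large_good {N M : ℤ} (hM1 : 1 ≤ M) (hM2 : 2 * M ≤ N + 1) {Lc Rc : ℤ → Prop}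
    (hv : ∀ i, 0 ≤ i → i ≤ N → Lc i ∨ Rc i) (h0 : ¬ Rc 0) (hN : ¬ Lc N) {g : ℤ} (hg0 : 0 < g)
    (hgN : g < N) (hg : GoodP 0 Lc Rc g ∨ GoodS N Lc Rc g) :
    (∃ b, 0 < b ∧ b < N ∧ M ≤ b + 1 ∧ GoodP 0 Lc Rc b) ∨
      (∃ a, 0 < a ∧ a < N ∧ M ≤ N + 1 - a ∧ GoodS N Lc Rc a) := by
  by_contra hcon
  push Not at hcon
  obtain ⟨hP, hS⟩ := hcon
  have L0 : Lc 0 := (hv 0 le_rfl (by omega)).resolve_right h0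
  have RN : Rc N := (hv N (by omega) le_rfl).resolve_left hN
  -- consequences of not being good
  have P1 : ∀ b, 0 < b → b < N → M ≤ b + 1 → Lc b := by
    intro b h1 h2 h3
    by_contra h4
    exact hP b h1 h2 h3 ⟨(hv b h1.le h2.le).resolve_left h4, fun h => absurd h h4⟩
  have P2 : ∀ b, 0 < b → b < N → M ≤ b + 1 → Rc b → Lc (b - 1) → Rc (b + 1) := by
    intro b h1 h2 h3 h4 h5
    by_contra h6
    refine hP b h1 h2 h3 ⟨h4, fun _ => ⟨1, le_rfl, by push_cast; omega, by simpa using h5, ?_⟩⟩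
    intro j h7 h8
    obtain rfl : j = b + 1 := by push_cast at h8; omega
    exact h6
  have S1 : ∀ a, 0 < a → a < N → M ≤ N + 1 - a → Rc a := by
    intro a h1 h2 h3
    by_contra h4
    exact hS a h1 h2 h3 ⟨(hv a h1.le h2.le).resolve_right h4, fun h => absurd h h4⟩
  have S2 : ∀ a, 0 < a → a < N → M ≤ N + 1 - a → Lc a → Rc (a + 1) → Lc (a - 1) := by
    intro a h1 h2 h3 h4 h5
    by_contra h6
    refine hS a h1 h2 h3 ⟨h4, fun _ => ⟨1, le_rfl, by push_cast; omega, by simpa using h5, ?_⟩⟩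
    intro j h7 h8
    obtain rfl : j = a - 1 := by push_cast at h7; omega
    exact h6
  -- the two middle columns
  have LM : Lc (M - 1) := by
    rcases eq_or_lt_of_le hM1 with h | h
    · rw [← h]; simpa using L0
    · exact P1 _ (by omega) (by omega) (by omega)
  have RM : Rc M := by
    rcases eq_or_lt_of_le (show M ≤ N by omega) with h | h
    · rw [h]; exact RN
    · exact S1 _ (by omega) h (by omega)
  have down : ∀ d : ℕ, 0 ≤ M - 1 - d → Lc (M - 1 - d) ∧ Rc (M - d) := by
    intro d
    induction d with
    | zero => intro _; simpa using ⟨LM, RM⟩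
    | succ d ih =>
      intro hd
      push_cast at hd ⊢
      obtain ⟨h1, h2⟩ := ih (by omega)
      have h3 : Rc (M - 1 - d) := S1 _ (by omega) (by omega) (by omega)
      have h4 := S2 (M - 1 - d) (by omega) (by omega) (by omega) h1
        (by have e : M - 1 - (d : ℤ) + 1 = M - d := by ring
            rw [e]; exact h2)
      have e1 : M - 1 - ((d : ℤ) + 1) = M - 1 - d - 1 := by ring
      have e2 : M - ((d : ℤ) + 1) = M - 1 - d := by ring
      rw [e1, e2]
      exact ⟨h4, h3⟩
  have up : ∀ d : ℕ, M + d ≤ N → Lc (M - 1 + d) ∧ Rc (M + d) := by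
    intro d
    induction d with
    | zero => intro _; simpa using ⟨LM, RM⟩
    | succ d ih =>
      intro hd
      push_cast at hd ⊢
      obtain ⟨h1, h2⟩ := ih (by omega)
      have h3 : Lc (M + d) := P1 _ (by omega) (by omega) (by omega)
      have h4 := P2 (M + d) (by omega) (by omega) (by omega) h2
        (by have e : M + (d : ℤ) - 1 = M - 1 + d := by ring
            rw [e]; exact h1)
      have e1 : M - 1 + ((d : ℤ) + 1) = M + d := by ring
      rw [e1, ← add_assoc]
      exact ⟨h3, h4⟩
  have hL : ∀ i, 0 ≤ i → i < N → Lc i := by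
    intro i h1 h2
    rcases le_total i (M - 1) with h3 | h3
    · have := (down (M - 1 - i).toNat (by omega)).1
      have e : M - 1 - ((M - 1 - i).toNat : ℤ) = i := by omega
      rwa [e] at this
    · have := (up (i + 1 - M).toNat (by omega)).1
      have e : M - 1 + ((i + 1 - M).toNat : ℤ) = i := by omega
      rwa [e] at this
  have hR : ∀ i, 0 < i → i ≤ N → Rc i := by
    intro i h1 h2
    rcases le_total i M with h3 | h3
    · have := (down (M - i).toNat (by omega)).2
      have e : M - ((M - i).toNat : ℤ) = i := by omega
      rwa [e] at this
    · have := (up (i - M).toNat (by omega)).2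
      have e : M + ((i - M).toNat : ℤ) = i := by omega
      rwa [e] at this
  have := allB_not_good hL hR hg0 hgN
  tauto

/-! ## The convexity number of a ladder -/

section con

variable [Fintype V] {A : V → V → Prop} {c : V → ℤ} {r : V → Bool} {N : ℤ} {h v : ℤ → Bool}

theorem le_convexityNumber {C : Set V} (hC : DConvex A C) (hne : C ≠ Set.univ) :
    C.ncard ≤ convexityNumber A := by
  refine le_csSup ⟨Fintype.card V, ?_⟩ ⟨C, hC, hne, rfl⟩
  rintro k ⟨C, _, _, rfl⟩
  rw [← Nat.card_eq_fintype_card]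
  exact Set.ncard_le_card C

theorem Ladder.singleton_ne {V : Type*} {A : V → V → Prop} {c : V → ℤ} {r : V → Bool} {N : ℤ}
    {h v : ℤ → Bool} (L : Ladder A c r 0 N h v) (p : V) : ({p} : Set V) ≠ Set.univ := by
  intro e
  obtain ⟨q, h1, h2⟩ := L.surj 0 le_rfl L.lt.le (! r p)
  have : q ∈ ({p} : Set V) := by rw [e]; trivial
  rw [Set.mem_singleton_iff.1 this] at h2
  simp at h2

theorem Ladder.one_le (L : Ladder A c r 0 N h v) : 1 ≤ convexityNumber A := by
  obtain ⟨p, _, _⟩ := L.surj 0 le_rfl L.lt.le true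
  have := le_convexityNumber (dconvex_singleton A p) (L.singleton_ne p)
  simpa using this

theorem Ladder.attained (L : Ladder A c r 0 N h v) :
    ∃ C : Set V, DConvex A C ∧ C ≠ Set.univ ∧ C.ncard = convexityNumber A := by
  have : convexityNumber A ∈ {k | ∃ C : Set V, DConvex A C ∧ C ≠ Set.univ ∧ C.ncard = k} := by
    refine Nat.sSup_mem ?_ ⟨Fintype.card V, ?_⟩
    · obtain ⟨p, _, _⟩ := L.surj 0 le_rfl L.lt.le true
      exact ⟨_, {p}, dconvex_singleton A p, L.singleton_ne p, rfl⟩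
    · rintro k ⟨C, _, _, rfl⟩
      rw [← Nat.card_eq_fintype_card]
      exact Set.ncard_le_card C
  exact this

theorem Ladder.cases (L : Ladder A c r 0 N h v) {C : Set V} (hC : DConvex A C)
    (hne : C ≠ Set.univ) :
    C.ncard = 1 ∨ ∃ a b, 0 ≤ a ∧ a < b ∧ b ≤ N ∧ C.ncard = 2 * (b + 1 - a).toNat ∧
      ((b < N ∧ GoodP 0 (fun i => v i ≠ h i) (fun i => v i = h (i - 1)) b) ∨
        (b = N ∧ 0 < a ∧ GoodS N (fun i => v i ≠ h i) (fun i => v i = h (i - 1)) a)) := by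
  by_cases hs : C.Subsingleton
  · left
    obtain ⟨p, hp⟩ := hC.1
    rw [hs.eq_singleton_of_mem hp]
    simp
  · right
    obtain ⟨a, b, h1, h2, h3, rfl⟩ := L.interval_of_convex hC hs
    refine ⟨a, b, h1, h2, h3, L.ncard_interval h1 h3, ?_⟩
    rcases h3.eq_or_lt with h4 | h4
    · right
      have ha : 0 < a := by
        rcases h1.eq_or_lt with h5 | h5
        · exfalso
          apply hne
          ext p
          have := L.bd p
          simp only [Set.mem_ofPred_eq, Set.mem_univ, iff_true]
          omega
        · exact h5
      exact ⟨h4, ha, L.goodS_of_convex ha h2 h3 hC⟩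
    · left
      exact ⟨h4, L.goodP_of_convex h1 h2 h4 hC⟩

theorem Ladder.lower_le (L : Ladder A c r 0 N h v) {b : ℤ} (h1 : 0 ≤ b) (h2 : b < N)
    (hg : GoodP 0 (fun i => v i ≠ h i) (fun i => v i = h (i - 1)) b) :
    2 * (b + 1).toNat ≤ convexityNumber A := by
  have hC := L.lower_convex h1 h2 hg
  have e : {p | c p ≤ b} = {p | 0 ≤ c p ∧ c p ≤ b} := by
    ext p; have := L.bd p; simp only [Set.mem_ofPred_eq]; omega
  rw [e] at hC
  have := le_convexityNumber hC (by
    intro e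
    obtain ⟨q, hq, _⟩ := L.surj N (by omega) le_rfl true
    have : q ∈ {p | 0 ≤ c p ∧ c p ≤ b} := by rw [e]; trivial
    simp only [Set.mem_ofPred_eq] at this
    omega)
  rw [L.ncard_interval le_rfl h2.le] at this
  simpa using this

theorem Ladder.upper_le (L : Ladder A c r 0 N h v) {a : ℤ} (h1 : 0 < a) (h2 : a ≤ N)
    (hg : GoodS N (fun i => v i ≠ h i) (fun i => v i = h (i - 1)) a) :
    2 * (N + 1 - a).toNat ≤ convexityNumber A := by
  have hC := L.upper_convex h1 h2 hg
  have e : {p | a ≤ c p} = {p | a ≤ c p ∧ c p ≤ N} := by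
    ext p; have := L.bd p; simp only [Set.mem_ofPred_eq]; omega
  rw [e] at hC
  have := le_convexityNumber hC (by
    intro e
    obtain ⟨q, hq, _⟩ := L.surj 0 (by omega) (by omega) true
    have : q ∈ {p | a ≤ c p ∧ c p ≤ N} := by rw [e]; trivial
    simp only [Set.mem_ofPred_eq] at this
    omega)
  rwa [L.ncard_interval h1.le le_rfl] at this

theorem Ladder.spectrum_sub (n : ℕ) (hn : 2 ≤ n) (L : Ladder A c r 0 (n - 1 : ℤ) h v) :
    convexityNumber A ∈
      (({1} : Set ℕ) ∪ {k : ℕ | ∃ j : ℕ, n / 2 ≤ j ∧ j ≤ n - 1 ∧ k = 2 * j}) \ {2} := by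
  obtain ⟨C, hC, hne, hcard⟩ := L.attained
  rw [← hcard]
  rcases L.cases hC hne with h1 | ⟨a, b, h1, h2, h3, h4, h5⟩
  · rw [h1]; simp
  · have hlow : 2 * (n / 2) ≤ C.ncard := by
      rw [hcard]
      have hlarge := exists_large_good (N := (n : ℤ) - 1) (M := ((n / 2 : ℕ) : ℤ)) (by omega)
        (by omega) (Lc := fun i => v i ≠ h i) (Rc := fun i => v i = h (i - 1)) L.valid L.nrc
        (fun e => e L.nlc) (g := if b < n - 1 then b else a)
        (by split_ifs <;> omega) (by split_ifs <;> omega)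
        (by
          rcases h5 with h5 | h5
          · rw [if_pos h5.1]; exact Or.inl h5.2
          · rw [if_neg (by omega)]; exact Or.inr h5.2.2)
      rcases hlarge with ⟨b', g1, g2, g3, g4⟩ | ⟨a', g1, g2, g3, g4⟩
      · have := L.lower_le g1.le g2 g4
        omega
      · have := L.upper_le g1 g2.le g4
        omega
    have hb : b + 1 - a ≤ n - 1 := by rcases h5 with h5 | h5 <;> omega
    refine ⟨Or.inr ⟨(b + 1 - a).toNat, by omega, by omega, h4⟩, ?_⟩
    simp only [Set.mem_singleton_iff]
    omega

theorem Ladder.eq_one (L : Ladder A c r 0 N h v) (hL : ∀ i, 0 ≤ i → i < N → v i ≠ h i)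
    (hR : ∀ i, 0 < i → i ≤ N → v i = h (i - 1)) : convexityNumber A = 1 := by
  obtain ⟨C, hC, hne, hcard⟩ := L.attained
  rw [← hcard]
  rcases L.cases hC hne with h1 | ⟨a, b, h1, h2, h3, h4, h5⟩
  · exact h1
  · exfalso
    rcases h5 with h5 | h5
    · exact (allB_not_good (N := N) (Lc := fun i => v i ≠ h i) (Rc := fun i => v i = h (i - 1))
        hL hR (g := b) (by omega) h5.1).1 h5.2
    · exact (allB_not_good (N := N) (Lc := fun i => v i ≠ h i) (Rc := fun i => v i = h (i - 1))
        hL hR (g := a) (by omega) (by omega)).2 h5.2.2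

theorem Ladder.eq_two_mul (L : Ladder A c r 0 N h v) (j : ℕ) (hj2 : 2 ≤ j) (hjN : (j : ℤ) ≤ N)
    (hNj : N ≤ 2 * j) (hL : ∀ i, 0 ≤ i → i ≤ N → (v i ≠ h i ↔ i ≠ j - 1 ∧ i ≠ N))
    (hR : ∀ i, 0 ≤ i → i ≤ N → (v i = h (i - 1) ↔ i ≠ 0 ∧ (i ≠ j + 1 ∨ i = N))) :
    convexityNumber A = 2 * j := by
  apply le_antisymm
  · obtain ⟨C, hC, hne, hcard⟩ := L.attained
    rw [← hcard]
    rcases L.cases hC hne with h1 | ⟨a, b, h1, h2, h3, h4, h5⟩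
    · omega
    · suffices b + 1 - a ≤ j by omega
      rcases h5 with ⟨h5, h6, h7⟩ | ⟨h5, h6, h7, h8⟩
      · by_contra hlt
        have r1 := (hR b (by omega) (by omega)).1 h6
        obtain ⟨m, m1, m2, m3, m4⟩ := h7 ((hL b (by omega) (by omega)).2 ⟨by omega, by omega⟩)
        have m5 := (hL (b - m) (by omega) (by omega)).1 m3
        have r2 := m4 (b + 1) (by omega) (by omega)
        have r3 : ¬ (b + 1 ≠ 0 ∧ (b + 1 ≠ j + 1 ∨ b + 1 = N)) := fun e => r2 ((hR (b + 1) (by omega) (by omega)).2 e)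
        have hbj : b = j := by omega
        have r4 := m4 (b + 2) (by omega) (by omega)
        exact r4 ((hR (b + 2) (by omega) (by omega)).2 ⟨by omega, by omega⟩)
      · by_contra hlt
        have l1 := (hL a (by omega) (by omega)).1 h7
        obtain ⟨m, m1, m2, m3, m4⟩ := h8 ((hR a (by omega) (by omega)).2 ⟨by omega, by omega⟩)
        have m5 := (hR (a + m) (by omega) (by omega)).1 m3
        have l2 := m4 (a - 1) (by omega) (by omega)
        have l3 : ¬ (a - 1 ≠ (j : ℤ) - 1 ∧ a - 1 ≠ N) := fun e => l2 ((hL (a - 1) (by omega) (by omega)).2 e)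
        have haj : a = j := by omega
        have l4 := m4 (a - 2) (by omega) (by omega)
        exact l4 ((hL (a - 2) (by omega) (by omega)).2 ⟨by omega, by omega⟩)
  · have := L.lower_le (b := j - 1) (by omega) (by omega)
      ⟨(hR _ (by omega) (by omega)).2 ⟨by omega, by omega⟩,
        fun e => absurd rfl ((hL _ (by omega) (by omega)).1 e).1⟩
    simpa using this

end con

/-! ## The grid as a ladder -/

section grid

variable {n : ℕ}

/-- Column of a grid vertex. -/
def gcol (p : Fin n × Fin 2) : ℤ := (p.1 : ℕ)

/-- Row of a grid vertex. -/
def grow (p : Fin n × Fin 2) : Bool := decide (p.2 = 1)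

theorem grow_eq (p q : Fin n × Fin 2) : grow p = grow q ↔ p.2 = q.2 := by
  obtain ⟨p1, p2⟩ := p
  obtain ⟨q1, q2⟩ := q
  unfold grow
  fin_cases p2 <;> fin_cases q2 <;> simp

theorem gcol_eq (p q : Fin n × Fin 2) : gcol p = gcol q ↔ p.1 = q.1 := by
  unfold gcol
  rw [Fin.ext_iff]; omega

theorem g_inj (p q : Fin n × Fin 2) (h1 : gcol p = gcol q) (h2 : grow p = grow q) : p = q :=
  Prod.ext ((gcol_eq p q).1 h1) ((grow_eq p q).1 h2)

theorem g_bd (p : Fin n × Fin 2) : 0 ≤ gcol p ∧ gcol p ≤ n - 1 := by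
  have := p.1.2
  unfold gcol; omega

theorem g_surj (i : ℤ) (h0 : 0 ≤ i) (h1 : i ≤ n - 1) (x : Bool) :
    ∃ p : Fin n × Fin 2, gcol p = i ∧ grow p = x := by
  refine ⟨(⟨i.toNat, by omega⟩, if x then 1 else 0), ?_, ?_⟩
  · simp only [gcol]; omega
  · cases x <;> simp [grow]

theorem grid_adj (p q : Fin n × Fin 2) : (gridGraph n 2).Adj p q ↔
    ((gcol q = gcol p + 1 ∨ gcol p = gcol q + 1) ∧ grow p = grow q) ∨
      (gcol p = gcol q ∧ grow p ≠ grow q) := by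
  rw [gridGraph, SimpleGraph.boxProd_adj, SimpleGraph.pathGraph_adj, SimpleGraph.pathGraph_adj,
    Ne, grow_eq, gcol_eq]
  have e1 : gcol q = gcol p + 1 ↔ (p.1 : ℕ) + 1 = q.1 := by unfold gcol; omega
  have e2 : gcol p = gcol q + 1 ↔ (q.1 : ℕ) + 1 = p.1 := by unfold gcol; omega
  rw [e1, e2]
  have e3 : ((p.2 : ℕ) + 1 = q.2 ∨ (q.2 : ℕ) + 1 = p.2) ↔ ¬ p.2 = q.2 := by
    rw [Fin.ext_iff]; have := p.2.2; have := q.2.2; omega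
  rw [e3]
  tauto

/-- Every word is realized. -/
theorem exists_ladder (hn : 2 ≤ n) (Lc Rc : ℤ → Prop)
    (hv : ∀ i, 0 ≤ i → i ≤ (n : ℤ) - 1 → Lc i ∨ Rc i) (h0 : ¬ Rc 0) (hN : ¬ Lc ((n : ℤ) - 1)) :
    ∃ A h v, IsOrientation (gridGraph n 2) A ∧ Ladder A gcol grow 0 ((n : ℤ) - 1) h v ∧
      ∀ i, 0 ≤ i → i ≤ (n : ℤ) - 1 → (v i ≠ h i ↔ Lc i) ∧ (v i = h (i - 1) ↔ Rc i) := by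
  obtain ⟨h, v, key⟩ : ∃ h v : ℤ → Bool, ∀ i, 0 ≤ i → i ≤ (n : ℤ) - 1 →
      (v i ≠ h i ↔ Lc i) ∧ (v i = h (i - 1) ↔ Rc i) := by
    classical
    let g : ℕ → Bool := fun k => Nat.rec true
      (fun k b => if Lc k ∧ Rc k then ! b else b) k
    have gs : ∀ k : ℕ, g (k + 1) = if Lc k ∧ Rc k then ! g k else g k := fun k => rfl
    let h : ℤ → Bool := fun i => g (i + 1).toNat
    let v : ℤ → Bool := fun i => if Rc i then g i.toNat else ! g i.toNat
    refine ⟨h, v, ?_⟩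
    · intro i h1 h2
      obtain ⟨k, rfl⟩ := Int.eq_ofNat_of_zero_le h1
      have e1 : h k = if Lc k ∧ Rc k then ! g k else g k := by rw [← gs]; rfl
      have e2 : h ((k : ℤ) - 1) = g k := by
        change g ((k : ℤ) - 1 + 1).toNat = g k
        congr 1; omega
      have e3 : v k = if Rc k then g k else ! g k := rfl
      have := hv k h1 h2
      rw [e1, e2, e3]
      by_cases hl : Lc k <;> by_cases hr : Rc k <;> simp_all
  let A : Fin n × Fin 2 → Fin n × Fin 2 → Prop := fun p q =>
    (gcol q = gcol p + 1 ∧ grow q = grow p ∧ grow p = h (gcol p)) ∨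
    (gcol p = gcol q + 1 ∧ grow q = grow p ∧ grow p ≠ h (gcol q)) ∨
    (gcol p = gcol q ∧ grow p ≠ grow q ∧ grow p = v (gcol p))
  refine ⟨A, h, v, ⟨?_, ?_, ?_⟩, ?_, key⟩
  · rintro p q (⟨h1, h2, h3⟩ | ⟨h1, h2, h3⟩ | ⟨h1, h2, h3⟩)
    · rw [grid_adj]; left; exact ⟨Or.inl h1, h2.symm⟩
    · rw [grid_adj]; left; exact ⟨Or.inr h1, h2.symm⟩
    · rw [grid_adj]; right; exact ⟨h1, h2⟩
  · intro p q hpq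
    rw [grid_adj] at hpq
    rcases hpq with ⟨h1 | h1, h2⟩ | ⟨h1, h2⟩
    · by_cases h3 : grow p = h (gcol p)
      · left; left; exact ⟨h1, h2.symm, h3⟩
      · right; right; left; exact ⟨h1, h2, by rw [← h2]; exact h3⟩
    · by_cases h3 : grow p = h (gcol q)
      · right; left; exact ⟨h1, h2, by rw [← h2]; exact h3⟩
      · left; right; left; exact ⟨h1, h2.symm, h3⟩
    · by_cases h3 : grow p = v (gcol p)
      · left; right; right; exact ⟨h1, h2, h3⟩
      · right; right; right; refine ⟨h1.symm, h2.symm, ?_⟩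
        rw [← h1]
        revert h2 h3
        cases grow p <;> cases grow q <;> cases v (gcol p) <;> simp
  · rintro p q (⟨h1, h2, h3⟩ | ⟨h1, h2, h3⟩ | ⟨h1, h2, h3⟩) (⟨h4, h5, h6⟩ | ⟨h4, h5, h6⟩ | ⟨h4, h5, h6⟩)
    · omega
    · exact h6 (by rw [h2]; exact h3)
    · omega
    · exact h3 (by rw [← h2]; exact h6)
    · omega
    · omega
    · omega
    · omega
    · exact h2 (by rw [h3, h6, h1])
  · refine ⟨by omega, g_inj, g_surj, g_bd, fun p q => Iff.rfl, ?_, ?_, ?_⟩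
    · exact fun e => h0 ((key 0 le_rfl (by omega)).2.1 e)
    · by_contra e
      exact hN ((key _ (by omega) le_rfl).1.1 e)
    · intro i h1 h2
      rcases hv i h1 h2 with h3 | h3
      · exact Or.inl ((key i h1 h2).1.2 h3)
      · exact Or.inr ((key i h1 h2).2.2 h3)

/-- In a walk crossing between columns there is a crossing arc. -/
theorem exists_cross {A : V → V → Prop} {k : ℕ} {f : ℕ → V} {p q : V} (hf : IsDirWalk A k f p q)
    (P : V → Prop) (hp : P p) (hq : ¬ P q) : ∃ x y, A x y ∧ P x ∧ ¬ P y := by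
  by_contra hno
  have : ∀ j ≤ k, P (f j) := by
    intro j
    induction j with
    | zero => intro _; rw [hf.1]; exact hp
    | succ j ih =>
      intro hj
      by_contra h2
      exact hno ⟨_, _, hf.2.2 j (by omega), ih (by omega), h2⟩
  have := this k le_rfl
  rw [hf.2.1] at this
  exact hq this

/-- Every strong orientation of the grid is a ladder. -/
theorem ladder_of_strong (hn : 2 ≤ n) {A : Fin n × Fin 2 → Fin n × Fin 2 → Prop}
    (hA : IsOrientation (gridGraph n 2) A) (hS : StrongConnected A) :
    ∃ h v, Ladder A gcol grow 0 ((n : ℤ) - 1) h v := by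
  classical
  obtain ⟨hadj, hor, hanti⟩ := hA
  let v : ℤ → Bool := fun i => decide (∃ p q, A p q ∧ gcol p = i ∧ gcol q = i ∧ grow p = true)
  let h : ℤ → Bool := fun i => if i = -1 then ! v 0 else if i = n - 1 then v (n - 1) else
    decide (∃ p q, A p q ∧ gcol p = i ∧ gcol q = i + 1 ∧ grow p = true)
  -- every gap has arcs in both directions
  have gapR : ∀ i : ℤ, 0 ≤ i → i < n - 1 → ∃ p q, A p q ∧ gcol p = i ∧ gcol q = i + 1 ∧
      grow p = grow q := by
    intro i h1 h2
    obtain ⟨p, hp, _⟩ := g_surj (n := n) 0 le_rfl (by omega) true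
    obtain ⟨q, hq, _⟩ := g_surj (n := n) (n - 1) (by omega) (by omega) true
    obtain ⟨k, f, hf⟩ := hS p q
    obtain ⟨x, y, hxy, hx, hy⟩ := exists_cross hf (fun z => gcol z ≤ i) (by omega) (by omega)
    have := (grid_adj x y).1 (hadj x y hxy)
    rcases this with ⟨h3 | h3, h4⟩ | ⟨h3, h4⟩
    · exact ⟨x, y, hxy, by omega, by omega, h4⟩
    · omega
    · omega
  have gapL : ∀ i : ℤ, 0 ≤ i → i < n - 1 → ∃ p q, A p q ∧ gcol p = i + 1 ∧ gcol q = i ∧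
      grow p = grow q := by
    intro i h1 h2
    obtain ⟨p, hp, _⟩ := g_surj (n := n) 0 le_rfl (by omega) true
    obtain ⟨q, hq, _⟩ := g_surj (n := n) (n - 1) (by omega) (by omega) true
    obtain ⟨k, f, hf⟩ := hS q p
    obtain ⟨x, y, hxy, hx, hy⟩ := exists_cross hf (fun z => i < gcol z) (by omega) (by omega)
    have := (grid_adj x y).1 (hadj x y hxy)
    rcases this with ⟨h3 | h3, h4⟩ | ⟨h3, h4⟩
    · omega
    · exact ⟨x, y, hxy, by omega, by omega, h4⟩
    · omega
  -- description of right-going arcs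
  have hval : ∀ p q, gcol q = gcol p + 1 → grow q = grow p → (A p q ↔ grow p = h (gcol p)) := by
    intro p q h1 h2
    have bp := g_bd p
    have bq := g_bd q
    have e : h (gcol p) = decide (∃ x y, A x y ∧ gcol x = gcol p ∧ gcol y = gcol p + 1 ∧
        grow x = true) := by
      change (if gcol p = -1 then _ else if gcol p = n - 1 then _ else _) = _
      rw [if_neg (by omega), if_neg (by omega)]
    have uniq : ∀ x y, A x y → gcol x = gcol p → gcol y = gcol p + 1 → grow x = grow y := by
      intro x y hxy hx hy
      rcases (grid_adj x y).1 (hadj x y hxy) with ⟨_, h4⟩ | ⟨h3, h4⟩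
      · exact h4
      · omega
    rw [e]
    cases hp : grow p with
    | true =>
      rw [eq_comm, decide_eq_true_iff]
      constructor
      · intro hpq; exact ⟨p, q, hpq, rfl, h1, hp⟩
      · rintro ⟨x, y, hxy, hx, hy, hr⟩
        have e1 : x = p := g_inj _ _ hx (by rw [hr, hp])
        have e2 : y = q := g_inj _ _ (by omega) (by rw [← uniq x y hxy hx hy, hr, h2, hp])
        rw [← e1, ← e2]; exact hxy
    | false =>
      rw [eq_comm, decide_eq_false_iff_not]
      constructor
      · rintro hpq ⟨x, y, hxy, hx, hy, hr⟩
        obtain ⟨s, t, hst, hs, ht, hrst⟩ := gapL (gcol p) bp.1 (by omega)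
        cases hrs : grow s with
        | true =>
          have e1 : t = x := g_inj _ _ (by omega) (by rw [hr, ← hrst, hrs])
          have e2 : s = y := g_inj _ _ (by omega) (by rw [← uniq x y hxy hx hy, hr, hrs])
          rw [e1, e2] at hst
          exact hanti _ _ hxy hst
        | false =>
          have e1 : t = p := g_inj _ _ (by omega) (by rw [hp, ← hrst, hrs])
          have e2 : s = q := g_inj _ _ (by omega) (by rw [h2, hp, hrs])
          rw [e1, e2] at hst
          exact hanti _ _ hpq hst
      · intro hno
        obtain ⟨s, t, hst, hs, ht, hrst⟩ := gapR (gcol p) bp.1 (by omega)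
        cases hrs : grow s with
        | true => exact absurd ⟨s, t, hst, hs, ht, hrs⟩ hno
        | false =>
          have e1 : s = p := g_inj _ _ (by omega) (by rw [hp, hrs])
          have e2 : t = q := g_inj _ _ (by omega) (by rw [h2, hp, ← hrst, hrs])
          rw [← e1, ← e2]; exact hst
  have vval : ∀ p q, gcol p = gcol q → grow p ≠ grow q → (A p q ↔ grow p = v (gcol p)) := by
    intro p q h1 h2
    have hpq' : A p q ∨ A q p := hor p q ((grid_adj p q).2 (Or.inr ⟨h1, h2⟩))
    have uniq : ∀ x y, A x y → gcol x = gcol y → grow x ≠ grow y := by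
      intro x y hxy hx
      rcases (grid_adj x y).1 (hadj x y hxy) with ⟨h3, h4⟩ | ⟨h3, h4⟩
      · omega
      · exact h4
    have e : v (gcol p) = decide (∃ x y, A x y ∧ gcol x = gcol p ∧ gcol y = gcol p ∧
        grow x = true) := rfl
    rw [e]
    cases hp : grow p with
    | true =>
      rw [eq_comm, decide_eq_true_iff]
      constructor
      · intro hpq; exact ⟨p, q, hpq, rfl, h1.symm, hp⟩
      · rintro ⟨x, y, hxy, hx, hy, hr⟩
        have e1 : x = p := g_inj _ _ hx (by rw [hr, hp])
        have h3 := uniq x y hxy (by omega)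
        have e2 : y = q := g_inj _ _ (by omega) (by
          revert h2 h3; rw [hr, hp]; cases grow y <;> cases grow q <;> simp)
        rw [← e1, ← e2]; exact hxy
    | false =>
      have hq : grow q = true := by
        revert h2; rw [hp]; cases grow q <;> simp
      rw [eq_comm, decide_eq_false_iff_not]
      constructor
      · rintro hpq ⟨x, y, hxy, hx, hy, hr⟩
        have e1 : x = q := g_inj _ _ (by omega) (by rw [hr, hq])
        have h3 := uniq x y hxy (by omega)
        have e2 : y = p := g_inj _ _ (by omega) (by
          revert h3; rw [hr, hp]; cases grow y <;> simp)
        rw [e1, e2] at hxy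
        exact hanti _ _ hpq hxy
      · intro hno
        rcases hpq' with h3 | h3
        · exact h3
        · exact absurd ⟨q, p, h3, h1.symm, rfl, hq⟩ hno
  have harc : ∀ p q, A p q ↔ (gcol q = gcol p + 1 ∧ grow q = grow p ∧ grow p = h (gcol p)) ∨
    (gcol p = gcol q + 1 ∧ grow q = grow p ∧ grow p ≠ h (gcol q)) ∨
    (gcol p = gcol q ∧ grow p ≠ grow q ∧ grow p = v (gcol p)) := by
    intro p q
    constructor
    · intro hpq
      rcases (grid_adj p q).1 (hadj p q hpq) with ⟨h1 | h1, h2⟩ | ⟨h1, h2⟩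
      · left; exact ⟨h1, h2.symm, (hval p q h1 h2.symm).1 hpq⟩
      · right; left
        refine ⟨h1, h2.symm, fun e => ?_⟩
        exact hanti _ _ hpq ((hval q p h1 h2).2 (by rw [← h2]; exact e))
      · right; right; exact ⟨h1, h2, (vval p q h1 h2).1 hpq⟩
    · rintro (⟨h1, h2, h3⟩ | ⟨h1, h2, h3⟩ | ⟨h1, h2, h3⟩)
      · exact (hval p q h1 h2).2 h3
      · rcases hor p q ((grid_adj p q).2 (Or.inl ⟨Or.inr h1, h2.symm⟩)) with h4 | h4
        · exact h4
        · exact absurd (by rw [← h2]; exact (hval q p h1 h2.symm).1 h4) h3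
      · exact (vval p q h1 h2).2 h3
  have em1 : h (0 - 1) = ! v 0 := by
    change (if (0 - 1 : ℤ) = -1 then _ else _) = _
    rw [if_pos (by norm_num)]
  have eN : h ((n : ℤ) - 1) = v ((n : ℤ) - 1) := by
    change (if (n - 1 : ℤ) = -1 then _ else if (n - 1 : ℤ) = n - 1 then _ else _) = _
    rw [if_neg (by omega), if_pos rfl]
  refine ⟨h, v, by omega, g_inj, g_surj, g_bd, harc, by rw [em1]; simp, eN.symm, ?_⟩
  intro i h1 h2
  by_contra hcon
  push Not at hcon
  obtain ⟨hc1, hc2⟩ := hcon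
  obtain ⟨p, hp1, hp2⟩ := g_surj i h1 h2 (v i)
  obtain ⟨q, hq1, hq2⟩ := g_surj i h1 h2 (! v i)
  obtain ⟨k, f, hf⟩ := hS q p
  obtain ⟨x, y, hxy, hx, hy⟩ := exists_cross hf (fun z => z ≠ p)
    (by intro e; rw [e, hp2] at hq2; simp at hq2) (by simp)
  simp only [ne_eq, not_not] at hy
  rw [hy] at hxy
  rcases (harc _ _).1 hxy with ⟨h3, h4, h5⟩ | ⟨h3, h4, h5⟩ | ⟨h3, h4, h5⟩
  · have e : gcol x = i - 1 := by omega
    rw [← h4, hp2, e] at h5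
    exact hc2 h5
  · rw [← h4, hp2, hp1] at h5
    exact h5 hc1
  · rw [h3, hp1] at h5
    exact h4 (by rw [h5, hp2])

end grid

/-- The strong convexity spectrum of the grid `P_n □ P_2`. -/
theorem strongConvexitySpectrum_grid_n2 (n : ℕ) (hn : 2 ≤ n) :
    strongConvexitySpectrum (gridGraph n 2) =
      (({1} : Set ℕ) ∪ {k : ℕ | ∃ j : ℕ, n / 2 ≤ j ∧ j ≤ n - 1 ∧ k = 2 * j}) \ {2} := by
  ext k
  constructor
  · rintro ⟨A, hA, hS, rfl⟩
    obtain ⟨h, v, L⟩ := ladder_of_strong hn hA hS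
    exact L.spectrum_sub n hn
  · rintro ⟨hk, hk2⟩
    simp only [Set.mem_singleton_iff] at hk2
    rcases hk with hk | ⟨j, h1, h2, rfl⟩
    · obtain ⟨A, h, v, hA, L, key⟩ := exists_ladder hn (fun i => i ≠ (n : ℤ) - 1) (fun i => i ≠ 0)
        (by intro i _ _; omega) (by simp) (by simp)
      refine ⟨A, hA, L.strong, ?_⟩
      rw [Set.mem_singleton_iff.1 hk]
      exact L.eq_one (fun i g1 g2 => (key i g1 g2.le).1.2 g2.ne)
        (fun i g1 g2 => (key i g1.le g2).2.2 g1.ne')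
    · obtain ⟨A, h, v, hA, L, key⟩ := exists_ladder hn
        (fun i => i ≠ (j : ℤ) - 1 ∧ i ≠ (n : ℤ) - 1)
        (fun i => i ≠ 0 ∧ (i ≠ (j : ℤ) + 1 ∨ i = (n : ℤ) - 1))
        (by intro i _ _; omega) (by simp) (by simp)
      refine ⟨A, hA, L.strong, ?_⟩
      exact L.eq_two_mul j (by omega) (by omega) (by omega)
        (fun i g1 g2 => (key i g1 g2).1) (fun i g1 g2 => (key i g1 g2).2)
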